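/- arXiv:1603.09288 — 2 statements merged into one kernel-verified Lean document; each statement's English description precedes it below -/
import Mathlib

section
/- If the defect of commutativity is k = 0 (equivalently ρ = 0), then the annihilator ideal 𝔄(G) ⊴ ℤ[X,Y] contains Y^{e−1} as the power of Y with minimal exponent, i.e. Y^{e−1} ∈ 𝔄(G) and Y^{e−2} ∉ 𝔄(G). -/
/-!
The exponent `j` of `Y` corresponds to `t_{j+2}`, so the claim is `t_{e+1} = 1` and `t_e ≠ 1`, where for
`k = 0` the last nontrivial member of the `τ`-sequence is `τ_e`.

For indices at least `5` this is immediate from `t_j = τ_j τ_{j+1}`. For index `4`, the relation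
for `t₃⁻¹ τ₃ τ₄` writes `t₃` as `τ₃` times an element commuting with `y` (as soon as `τ₅ = 1`), hence
`t₄ = [t₃, y]` is conjugate to `τ₄ = [τ₃, y]` (`tSeq_four_eq_one_iff`).

The remaining point is `t₃ ≠ 1` when `e = 3`, which does not follow from the relation for `t₃` alone
and is obtained by counting. If `t₃ = 1`, then `y` centralizes every `s_i` and `x` maps `s_i` to
`s_i s_{i+1}`, so the subgroup generated by the `s_i` is normal with abelian quotient and contains
`G'`. As `s_i = 1` for `i ≥ m` and `s_i³ ∈ ⟨s_{i+1}, s_{i+2}, …⟩`, this gives `|G'| ≤ 3^{m-2}`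
and `|G| ≤ 3^m < 3^n`, a contradiction.
-/

open MvPolynomial

/-- The paper's commutator `[a,b] = a⁻¹ b⁻¹ a b`. -/
def pcomm {G : Type*} [Group G] (a b : G) : G := a⁻¹ * b⁻¹ * a * b

/-- The iterated commutator `s₂^{(x-1)^i (y-1)^j}`, where `s₂ = [y,x]`,
obtained by commutating `i` times with `x` and `j` times with `y`. -/
def wIter {G : Type*} [Group G] (x y : G) (i j : ℕ) : G :=
  (fun t => pcomm t x)^[i] ((fun t => pcomm t y)^[j] (pcomm y x))

/-- The higher commutators `s₂ = [y,x]`, `s_j = [s_{j-1}, x]` for `j ≥ 3`. -/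
def sSeq {G : Type*} [Group G] (x y : G) (j : ℕ) : G :=
  (fun t => pcomm t x)^[j - 2] (pcomm y x)

/-- The higher commutators `t₂ = [y,x]`, `t_j = [t_{j-1}, y]` for `j ≥ 3`. -/
def tSeq {G : Type*} [Group G] (x y : G) (j : ℕ) : G :=
  (fun t => pcomm t y)^[j - 2] (pcomm y x)

/-- `σ₃ = y³`, `σ_j = [σ_{j-1}, x]` for `j ≥ 4`. -/
def sigSeq {G : Type*} [Group G] (x y : G) (j : ℕ) : G :=
  (fun t => pcomm t x)^[j - 3] (y ^ 3)

/-- `τ₃ = x³`, `τ_j = [τ_{j-1}, y]` for `j ≥ 4`. -/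
def tauSeq {G : Type*} [Group G] (x y : G) (j : ℕ) : G :=
  (fun t => pcomm t y)^[j - 3] (x ^ 3)

section Helpers

variable {G : Type*} [Group G]

/-! ### Commutator sequences -/

lemma pcomm_eq_one_iff (a b : G) : pcomm a b = 1 ↔ Commute a b := by
  unfold pcomm Commute SemiconjBy
  constructor
  · intro h
    have : b * a * (a⁻¹ * b⁻¹ * a * b) = b * a := by rw [h, mul_one]
    rw [← this]; group
  · intro h
    rw [mul_assoc, h]; group

/-- Right multiplication of `a` by an element commuting with `b` conjugates `[a, b]`. -/
lemma pcomm_mul_left (a c b : G) (h : Commute c b) :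
    pcomm (a * c) b = c⁻¹ * pcomm a b * c := by
  unfold pcomm
  have : a * c * b = a * b * c := by rw [mul_assoc, h.eq, mul_assoc]
  calc (a * c)⁻¹ * b⁻¹ * (a * c) * b = (a * c)⁻¹ * b⁻¹ * (a * c * b) := by group
    _ = _ := by rw [this]; group

lemma sSeq_succ (x y : G) (j : ℕ) (hj : 2 ≤ j) :
    sSeq x y (j + 1) = pcomm (sSeq x y j) x := by
  unfold sSeq
  rw [show j + 1 - 2 = (j - 2) + 1 by omega, Function.iterate_succ_apply']

lemma tSeq_succ (x y : G) (j : ℕ) (hj : 2 ≤ j) :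
    tSeq x y (j + 1) = pcomm (tSeq x y j) y := by
  unfold tSeq
  rw [show j + 1 - 2 = (j - 2) + 1 by omega, Function.iterate_succ_apply']

lemma tauSeq_succ (x y : G) (j : ℕ) (hj : 3 ≤ j) :
    tauSeq x y (j + 1) = pcomm (tauSeq x y j) y := by
  unfold tauSeq
  rw [show j + 1 - 3 = (j - 3) + 1 by omega, Function.iterate_succ_apply']

lemma sSeq_mem_commutator (x y : G) (j : ℕ) (hj : 2 ≤ j) : sSeq x y j ∈ commutator G := by
  have key : ∀ a b : G, pcomm a b ∈ commutator G := fun a b => by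
    have := Subgroup.commutator_mem_commutator (Subgroup.mem_top a⁻¹) (Subgroup.mem_top b⁻¹)
    rw [commutatorElement_def, inv_inv, inv_inv] at this
    exact this
  rcases hj.eq_or_lt with rfl | h
  · exact key y x
  · obtain ⟨i, rfl⟩ : ∃ i, j = i + 1 := ⟨j - 1, by omega⟩
    rw [sSeq_succ x y i (by omega)]
    exact key _ _

/-- If `t₃ = τ₃ c` with `c` commuting with `y`, then `t₄` is a conjugate of `τ₄`. -/
lemma tSeq_four_eq_one_iff (x y c : G) (hc : Commute c y)
    (h : tSeq x y 3 = tauSeq x y 3 * c) : tSeq x y 4 = 1 ↔ tauSeq x y 4 = 1 := by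
  rw [tSeq_succ x y 3 (by norm_num), tauSeq_succ x y 3 le_rfl, h, pcomm_mul_left _ _ _ hc]
  constructor
  · intro h
    calc pcomm (tauSeq x y 3) y = c * (c⁻¹ * pcomm (tauSeq x y 3) y * c) * c⁻¹ := by group
      _ = 1 := by rw [h]; group
  · intro h
    rw [h]; group

/-! ### Bounding the order of the derived subgroup -/

/-- Adjoining to a finite subgroup a commuting element whose cube already lies in it
multiplies the order by at most `3`. -/
lemma card_le_three_mul [Finite G] (H K : Subgroup G) (g : G)
    (hcomm : ∀ k ∈ K, Commute g k) (hg : g ^ 3 ∈ K)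
    (hH : H ≤ Subgroup.closure (insert g (K : Set G))) :
    Nat.card H ≤ 3 * Nat.card K := by
  let L : Subgroup G :=
    { carrier := {z | ∃ a : ℤ, ∃ k ∈ K, z = g ^ a * k}
      one_mem' := ⟨0, 1, K.one_mem, by simp⟩
      mul_mem' := by
        rintro _ _ ⟨a, k, hk, rfl⟩ ⟨b, l, hl, rfl⟩
        refine ⟨a + b, k * l, K.mul_mem hk hl, ?_⟩
        have h := ((hcomm k hk).zpow_left b).eq
        rw [zpow_add]
        calc g ^ a * k * (g ^ b * l) = g ^ a * (k * g ^ b) * l := by group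
          _ = _ := by rw [← h]; group
      inv_mem' := by
        rintro _ ⟨a, k, hk, rfl⟩
        refine ⟨-a, k⁻¹, K.inv_mem hk, ?_⟩
        have h := (((hcomm k hk).zpow_left a).inv_inv).eq
        rw [mul_inv_rev, zpow_neg, h] }
  have hL : H ≤ L := by
    refine hH.trans ((Subgroup.closure_le L).2 ?_)
    rintro z (rfl | hz)
    · exact ⟨1, 1, K.one_mem, by simp⟩
    · exact ⟨0, z, hz, by simp⟩
  let f : Fin 3 × K → G := fun p => g ^ (p.1 : ℕ) * p.2
  have hsub : (H : Set G) ⊆ Set.range f := by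
    intro z hz
    obtain ⟨a, k, hk, rfl⟩ := hL hz
    obtain ⟨r, hr⟩ : ∃ r : ℕ, a % 3 = r := ⟨(a % 3).toNat, by omega⟩
    refine ⟨(⟨r, by omega⟩, ⟨(g ^ 3) ^ (a / 3) * k, K.mul_mem (K.zpow_mem hg _) hk⟩), ?_⟩
    have ha : a = r + 3 * (a / 3) := by omega
    change g ^ r * ((g ^ 3) ^ (a / 3) * k) = g ^ a * k
    conv_rhs => rw [ha, zpow_add, zpow_mul]
    simp only [zpow_natCast, mul_assoc]
    norm_cast
  calc Nat.card H ≤ Nat.card (Set.range f) := Nat.card_mono (Set.toFinite _) hsub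
    _ ≤ Nat.card (Fin 3 × K) := Finite.card_range_le f
    _ = 3 * Nat.card K := by simp [Nat.card_prod]

/-- A polycyclic bound: commuting elements `s_i` that vanish from index `m` on and whose cubes
lie in the span of the later ones generate a group of order at most `3 ^ d` from `m - d` on. -/
lemma card_closure_le [Finite G] (s : ℕ → G) (m : ℕ) (hone : ∀ i, m ≤ i → s i = 1)
    (hcomm : ∀ i j, 2 ≤ i → 2 ≤ j → Commute (s i) (s j))
    (hcube : ∀ i, 2 ≤ i → s i ^ 3 ∈ Subgroup.closure (s '' Set.Ici (i + 1))) (d : ℕ)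
    (hd : d + 2 ≤ m) : Nat.card (Subgroup.closure (s '' Set.Ici (m - d))) ≤ 3 ^ d := by
  induction d with
  | zero =>
    have : Subgroup.closure (s '' Set.Ici (m - 0)) = ⊥ := by
      rw [eq_bot_iff, Subgroup.closure_le]
      rintro _ ⟨i, hi, rfl⟩
      exact hone i hi
    rw [this]; simp
  | succ d ih =>
    have hi : m - d = m - (d + 1) + 1 := by omega
    have ih := ih (by omega)
    rw [hi] at ih
    generalize hj : m - (d + 1) = j at ih ⊢
    have hj2 : 2 ≤ j := by omega
    refine (card_le_three_mul _ (Subgroup.closure (s '' Set.Ici (j + 1))) (s j) ?_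
      (hcube j hj2) ?_).trans (by rw [pow_succ]; omega)
    · intro k hk
      have : Subgroup.closure (s '' Set.Ici (j + 1)) ≤ Subgroup.centralizer {s j} := by
        rw [Subgroup.closure_le]
        rintro _ ⟨i, hi, rfl⟩
        rw [Set.mem_Ici] at hi
        exact Subgroup.mem_centralizer_singleton_iff.2 (hcomm i j (by omega) hj2).eq
      exact (Subgroup.mem_centralizer_singleton_iff.1 (this hk)).symm
    · apply Subgroup.closure_mono
      rintro _ ⟨i, hi, rfl⟩
      rw [Set.mem_Ici] at hi
      rcases hi.eq_or_lt with rfl | h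
      · exact Set.mem_insert _ _
      · exact Set.mem_insert_of_mem _ (Subgroup.subset_closure ⟨i, h, rfl⟩)

/-- A normal subgroup containing `[y, x]` contains `G'` if `x`, `y` generate `G`. -/
lemma commutator_le_of_pcomm_mem (x y : G) (hgen : Subgroup.closure ({x, y} : Set G) = ⊤)
    (N : Subgroup G) [N.Normal] (h : pcomm y x ∈ N) : commutator G ≤ N := by
  let π := QuotientGroup.mk' N
  have hyx : Commute (π y) (π x) := by
    rw [← pcomm_eq_one_iff]
    exact (QuotientGroup.eq_one_iff _).2 h
  have gen : ∀ P : Subgroup G, x ∈ P → y ∈ P → ∀ g, g ∈ P := by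
    intro P hx hy g
    have : Subgroup.closure ({x, y} : Set G) ≤ P := by
      rw [Subgroup.closure_le]
      rintro z (rfl | rfl) <;> assumption
    rw [hgen] at this
    exact this (Subgroup.mem_top g)
  have cx : ∀ g, Commute (π g) (π x) := fun g => Subgroup.mem_centralizer_singleton_iff.1
    (gen ((Subgroup.centralizer {π x}).comap π)
      (Subgroup.mem_centralizer_singleton_iff.2 rfl)
      (Subgroup.mem_centralizer_singleton_iff.2 hyx.eq) g)
  have cy : ∀ g, Commute (π g) (π y) := fun g => Subgroup.mem_centralizer_singleton_iff.1
    (gen ((Subgroup.centralizer {π y}).comap π)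
      (Subgroup.mem_centralizer_singleton_iff.2 hyx.symm.eq)
      (Subgroup.mem_centralizer_singleton_iff.2 rfl) g)
  have c : ∀ g g', Commute (π g) (π g') := fun g g' => (Subgroup.mem_centralizer_singleton_iff.1
    (gen ((Subgroup.centralizer {π g}).comap π)
      (Subgroup.mem_centralizer_singleton_iff.2 (cx g).symm.eq)
      (Subgroup.mem_centralizer_singleton_iff.2 (cy g).symm.eq) g')).symm
  rw [commutator_def, Subgroup.commutator_le]
  intro a _ b _
  rw [← QuotientGroup.eq_one_iff]
  exact commutatorElement_eq_one_iff_commute.2 (c a b)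

/-- If `y` centralizes all `s_i` and the `s_i` satisfy the cube relations and vanish from `m` on,
then `|G'| ≤ 3 ^ (m - 2)`. -/
lemma card_commutator_le [Finite G] (x y : G) (m : ℕ) (hm : 2 ≤ m)
    (habel : ∀ a ∈ commutator G, ∀ b ∈ commutator G, a * b = b * a)
    (hgen : Subgroup.closure ({x, y} : Set G) = ⊤)
    (hone : ∀ i, m ≤ i → sSeq x y i = 1)
    (hy : ∀ i, 2 ≤ i → Commute (sSeq x y i) y)
    (hcube : ∀ i, 2 ≤ i → sSeq x y i ^ 3 * sSeq x y (i + 1) ^ 3 * sSeq x y (i + 2) = 1) :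
    Nat.card (commutator G) ≤ 3 ^ (m - 2) := by
  set N := Subgroup.closure (sSeq x y '' Set.Ici 2) with hN
  have hmem : ∀ i, 2 ≤ i → sSeq x y i ∈ N := fun i hi => Subgroup.subset_closure ⟨i, hi, rfl⟩
  have inv : ∀ g : G, (∀ i, 2 ≤ i → g * sSeq x y i * g⁻¹ ∈ N) →
      g ∈ Subgroup.normalizer (N : Set G) := by
    intro g hg
    apply Subgroup.mem_normalizer_fintype
    have : N ≤ N.comap (MulAut.conj g).toMonoidHom := by
      conv_lhs => rw [hN]
      rw [Subgroup.closure_le]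
      rintro _ ⟨i, hi, rfl⟩
      exact hg i hi
    exact fun k hk => this hk
  have hx' : x ∈ Subgroup.normalizer (N : Set G) := by
    rw [← inv_mem_iff]
    apply inv
    intro i hi
    have : x⁻¹ * sSeq x y i * x⁻¹⁻¹ = sSeq x y i * sSeq x y (i + 1) := by
      rw [sSeq_succ x y i hi, pcomm]; group
    rw [this]
    exact N.mul_mem (hmem i hi) (hmem _ (by omega))
  have hy' : y ∈ Subgroup.normalizer (N : Set G) := by
    apply inv
    intro i hi
    rw [← (hy i hi).eq, mul_inv_cancel_right]
    exact hmem i hi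
  have hnorm : N.Normal := by
    rw [← Subgroup.normalizer_eq_top_iff, eq_top_iff, ← hgen, Subgroup.closure_le]
    rintro z (rfl | rfl) <;> assumption
  have hle : commutator G ≤ N := commutator_le_of_pcomm_mem x y hgen N (hmem 2 le_rfl)
  have hcard := card_closure_le (sSeq x y) m hone
    (fun i j hi hj => habel _ (sSeq_mem_commutator x y i hi) _ (sSeq_mem_commutator x y j hj))
    (fun i hi => by
      have h1 : sSeq x y (i + 1) ∈ Subgroup.closure (sSeq x y '' Set.Ici (i + 1)) :=
        Subgroup.subset_closure ⟨_, Set.mem_Ici.2 le_rfl, rfl⟩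
      have h2 : sSeq x y (i + 2) ∈ Subgroup.closure (sSeq x y '' Set.Ici (i + 1)) :=
        Subgroup.subset_closure ⟨_, Set.mem_Ici.2 (by omega), rfl⟩
      have h := hcube i hi
      rw [mul_assoc] at h
      rw [eq_inv_of_mul_eq_one_left h]
      exact Subgroup.inv_mem _ (Subgroup.mul_mem _ (Subgroup.pow_mem _ h1 3) h2))
    (m - 2) (by omega)
  rw [show m - (m - 2) = 2 by omega] at hcard
  exact (Subgroup.card_le_of_le hle).trans hcard

end Helpers

/-! ### The minimal exponent of `Y` -/

theorem minimal_power_of_Y_in_annihilator_defect_zero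
    {G : Type*} [Group G] [Finite G]
    (m n e k : ℕ) (x y : G) (α β γ δ ρ : ℤ)
    (hm : 4 ≤ m) (hmn : m < n) (hn2m : n ≤ 2 * m - 3) (he : e = n - m + 2) (he3 : 3 ≤ e)
    (hk : k ≤ 1) (hkrho : k = 0 ↔ ρ = 0)
    (hα : α = -1 ∨ α = 0 ∨ α = 1) (hβ : β = -1 ∨ β = 0 ∨ β = 1)
    (hγ : γ = -1 ∨ γ = 0 ∨ γ = 1) (hδ : δ = -1 ∨ δ = 0 ∨ δ = 1)
    (hρ : ρ = -1 ∨ ρ = 0 ∨ ρ = 1)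
    (hcard : Nat.card G = 3 ^ n)
    (hab : Nat.card (G ⧸ commutator G) = 9)
    (habel : ∀ a ∈ commutator G, ∀ b ∈ commutator G, a * b = b * a)
    (hgen : Subgroup.closure ({x, y} : Set G) = ⊤)
    (hR1s : ∀ i, 3 ≤ i → sSeq x y i ^ 3 * sSeq x y (i + 1) ^ 3 * sSeq x y (i + 2) = 1)
    (hR1t : ∀ i, 3 ≤ i → tSeq x y i ^ 3 * tSeq x y (i + 1) ^ 3 * tSeq x y (i + 2) = 1)
    (hR2sig : ∀ j, 3 ≤ j → sigSeq x y j ^ 3 * sigSeq x y (j + 1) ^ 3 * sigSeq x y (j + 2) = 1)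
    (hR2tau : ∀ j, 3 ≤ j → tauSeq x y j ^ 3 * tauSeq x y (j + 1) ^ 3 * tauSeq x y (j + 2) = 1)
    (hR3s : sSeq x y 2 ^ 3 * sSeq x y 3 ^ 3 * sSeq x y 4 = (tauSeq x y 4)⁻¹)
    (hR3t : tSeq x y 2 ^ 3 * tSeq x y 3 ^ 3 * tSeq x y 4 = sigSeq x y 4)
    (hR4sig : ∀ j, 3 ≤ j → pcomm (sigSeq x y j) y = 1)
    (hR4tau : ∀ j, 3 ≤ j → pcomm (tauSeq x y j) x = 1)
    (hR5a : ∀ i, 3 ≤ i → i ≤ m - 1 → sigSeq x y i ≠ 1)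
    (hR5b : ∀ i, m ≤ i → sigSeq x y i = 1)
    (hR6a : ∀ j, 3 ≤ j → j ≤ e + k → tauSeq x y j ≠ 1)
    (hR6b : ∀ j, e + k + 1 ≤ j → tauSeq x y j = 1)
    (hR7sig : ∀ i, 5 ≤ i → sigSeq x y i = sSeq x y (i - 2) ^ 3)
    (hR7tau : ∀ i, 5 ≤ i → tauSeq x y i = tSeq x y (i - 2) ^ (-3 : ℤ))
    (hR8s : ∀ j, 5 ≤ j → sSeq x y j = (sigSeq x y j)⁻¹ * (sigSeq x y (j + 1))⁻¹)
    (hR8t : ∀ j, 5 ≤ j → tSeq x y j = tauSeq x y j * tauSeq x y (j + 1))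
    (hR9s : pcomm (sSeq x y 3) y = sigSeq x y (m - 1) ^ (-(ρ * δ)))
    (hR9t : pcomm (tSeq x y 3) x = sigSeq x y (m - 1) ^ (-(ρ * δ)))
    (hR10 : sSeq x y 2 ^ 3 * (sSeq x y 3 * tSeq x y 3) ^ 3 * sSeq x y 4 * tSeq x y 4 =
      sigSeq x y (m - 1) ^ (ρ * β))
    (hR11 : tauSeq x y (e + 1) = sigSeq x y (m - 1) ^ (-ρ))
    (hR12 : sSeq x y 4 * sigSeq x y 4 * sigSeq x y 5 = sigSeq x y (m - 1) ^ (ρ * β))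
    (hR13 : sSeq x y 3 * sigSeq x y 3 * sigSeq x y 4 =
      sigSeq x y (m - 2) ^ (ρ * β) * sigSeq x y (m - 1) ^ γ * tauSeq x y e ^ δ)
    (hR14 : (tSeq x y 3)⁻¹ * tauSeq x y 3 * tauSeq x y 4 =
      sigSeq x y (m - 2) ^ (ρ * δ) * sigSeq x y (m - 1) ^ α * tauSeq x y e ^ β)
    (hk0 : k = 0)
    (Ψ : MvPolynomial (Fin 2) ℤ → G)
    (hΨadd : ∀ f g, Ψ (f + g) = Ψ f * Ψ g)
    (hΨmon : ∀ i j : ℕ, Ψ (X 0 ^ i * X 1 ^ j) = wIter x y i j)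
    (A : Ideal (MvPolynomial (Fin 2) ℤ))
    (hA : ∀ f, f ∈ A ↔ Ψ f = 1)
    :
    X 1 ^ (e - 1) ∈ A ∧ X 1 ^ (e - 2) ∉ A := by
  obtain rfl : ρ = 0 := hkrho.1 hk0
  subst hk0
  have hΨY : ∀ j, Ψ (X 1 ^ j) = tSeq x y (j + 2) := fun j => by
    have h := hΨmon 0 j
    rw [pow_zero, one_mul] at h
    rw [h]; rfl
  rw [hA, hA, hΨY, hΨY, show e - 1 + 2 = e + 1 by omega, show e - 2 + 2 = e by omega]
  simp only [zero_mul, neg_zero, zpow_zero, one_mul, add_zero] at *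
  have hsy : ∀ j, 3 ≤ j → Commute (sigSeq x y j) y := fun j hj =>
    (pcomm_eq_one_iff _ _).1 (hR4sig j hj)
  have hty : ∀ j, e ≤ j → Commute (tauSeq x y j) y := fun j hj => by
    rw [← pcomm_eq_one_iff, ← tauSeq_succ x y j (by omega)]
    exact hR6b _ (by omega)
  -- For `e ≤ 4` the fourth terms of the two sequences vanish simultaneously.
  have h4 : e ≤ 4 → (tSeq x y 4 = 1 ↔ tauSeq x y 4 = 1) := by
    intro h
    refine tSeq_four_eq_one_iff x y
      (tauSeq x y 4 * (sigSeq x y (m - 1) ^ α * tauSeq x y e ^ β)⁻¹) ?_ ?_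
    · exact (hty 4 h).mul_left
        (((hsy _ (by omega)).zpow_left α).mul_left ((hty e le_rfl).zpow_left β)).inv_left
    · rw [← hR14]; group
  constructor
  · rcases he3.eq_or_lt with h | h
    · rw [← h]
      exact (h4 (by omega)).2 (hR6b 4 (by omega))
    · rw [hR8t _ (by omega), hR6b _ le_rfl, hR6b _ (by omega), one_mul]
  · rcases (show e = 3 ∨ e = 4 ∨ 5 ≤ e by omega) with h | h | h
    · intro ht
      rw [h] at ht
      have hs4 : sSeq x y 4 = (sigSeq x y 4 * sigSeq x y 5)⁻¹ := by
        rw [mul_assoc] at hR12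
        exact eq_inv_of_mul_eq_one_left hR12
      have hle := card_commutator_le x y m (by omega) habel hgen
        (fun i hi => by
          rcases (show i = 4 ∨ 5 ≤ i by omega) with rfl | h5
          · rw [hs4, hR5b 4 hi, hR5b 5 (by omega)]; simp
          · rw [hR8s i h5, hR5b i hi, hR5b (i + 1) (by omega)]; simp)
        (fun i hi => by
          rcases (show i = 2 ∨ i = 3 ∨ i = 4 ∨ 5 ≤ i by omega) with rfl | rfl | rfl | h5
          -- `s₂ = t₂`, so this is the assumption `t₃ = 1`.
          · exact (pcomm_eq_one_iff _ _).1 ht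
          · exact (pcomm_eq_one_iff _ _).1 hR9s
          · rw [hs4]
            exact ((hsy 4 (by omega)).mul_left (hsy 5 (by omega))).inv_left
          · rw [hR8s i h5]
            exact (hsy i (by omega)).inv_left.mul_left (hsy (i + 1) (by omega)).inv_left)
        (fun i hi => by
          rcases hi.eq_or_lt with rfl | h3
          · rw [hR3s, hR6b 4 (by omega), inv_one]
          · exact hR1s i h3)
      have hG := Subgroup.card_eq_card_quotient_mul_card_subgroup (commutator G)
      rw [hcard, hab] at hG
      have h1 : 9 * Nat.card (commutator G) ≤ 9 * 3 ^ (m - 2) := Nat.mul_le_mul_left 9 hle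
      have h2 : 9 * 3 ^ (m - 2) = 3 ^ m := by
        rw [show (9 : ℕ) = 3 ^ 2 by norm_num, ← pow_add]
        congr 1; omega
      have h3 : 3 ^ m < 3 ^ n := Nat.pow_lt_pow_right (by norm_num) hmn
      omega
    · rw [h]
      exact fun ht => hR6a 4 (by omega) (by omega) ((h4 (by omega)).1 ht)
    · rw [hR8t e h, hR6b (e + 1) le_rfl, mul_one]
      exact hR6a e (by omega) le_rfl
end

section
/- If the defect of commutativity is k = 1 (equivalently ρ = ±1), m ≥ 6, and e = 3 (i.e. G is of coclass r = 2 and class c ≥ 5), then the annihilator ideal of G equals 𝔄(G) = 𝔖_{m−2,2}(β,δ,ρ) := (X^{m−2}, Y² − (1−β)ρX^{m−3}, XY − ρδX^{m−3}, T(X,Y) + ρβX^{m−3}) as ideals of ℤ[X,Y], where T(X,Y) = X² + 3X + 3 + 3Y + Y². -/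
/-!
Write `m = M + 6`, so that the hypothesis on `e` gives `n = m + 1`. Let `I` be the ideal
generated by the four given polynomials.

The inclusion `I ⊆ A` is read off from the presentation. The relation `s_j = σ_j⁻¹σ_{j+1}⁻¹` gives
`s_m = 1` and `s_{m-1} = σ_{m-1}⁻¹`, which turns the relations for `[t₃, x]` and for
`s₂³(s₃t₃)³s₄t₄` into the generators starting with `XY` and `T`. The generator starting with `Y²`
comes from conjugating the relation for `t₃⁻¹τ₃τ₄` by `y` (`t_four_eq`).

The reverse inclusion is a comparison of orders (`annihilator_eq`). The image of `Ψ` is stable under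
conjugation by `x` and `y` and contains `[y, x]`, so it contains the derived subgroup
(`commutator_le_range`), whose order is `3^n / 9 = 3^(m-1)`. On the other hand the quotient of
`ℤ[X, Y]` by `I` has at most `3^(m-1)` elements: in it `3Y = 0` and `3` is a multiple of `X`, so
every element is `∑ aᵢXⁱ + bY` with `i ≤ m - 3` and `aᵢ, b ∈ {0, 1, 2}` (`quotient_card_le`).
Hence the surjection from this quotient onto the image of `Ψ` is injective.
-/

open MvPolynomial

/-! ### The order of the quotient ring -/

lemma aeval_eq_coeff_zero_add {Q : Type*} [CommRing Q] (ξ : Q) (p : Polynomial ℤ) :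
    Polynomial.aeval ξ p = ((p.coeff 0 : ℤ) : Q) + ξ * Polynomial.aeval ξ p.divX := by
  conv_lhs => rw [← Polynomial.divX_mul_X_add p]
  simp
  ring

lemma aeval_mul_of_mul_eq {Q : Type*} [CommRing Q] (ξ η c : Q) (h : ξ * η = c)
    (p : Polynomial ℤ) :
    Polynomial.aeval ξ p * η = ((p.coeff 0 : ℤ) : Q) * η + c * Polynomial.aeval ξ p.divX := by
  rw [aeval_eq_coeff_zero_add, ← h]
  ring

/-- If `3` is a multiple of `ξ` in `ℤ[ξ]`, every element of `ℤ[ξ]` has a `ξ`-adic expansion with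
digits in `{0, 1, 2}`, to any given length. -/
lemma exists_digits {Q : Type*} [CommRing Q] (ξ : Q)
    (h3 : ∃ q : Polynomial ℤ, (3 : Q) = ξ * Polynomial.aeval ξ q) (k : ℕ) (p : Polynomial ℤ) :
    ∃ (v : Fin k → Fin 3) (r : Polynomial ℤ),
      Polynomial.aeval ξ p = ∑ i, ((v i : ℕ) : Q) * ξ ^ (i : ℕ) + ξ ^ k * Polynomial.aeval ξ r := by
  obtain ⟨q, hq⟩ := h3
  induction k with
  | zero => exact ⟨Fin.elim0, p, by simp⟩
  | succ k ih =>
    obtain ⟨v, r, hr⟩ := ih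
    obtain ⟨a, b, hab⟩ : ∃ (a : Fin 3) (b : ℤ), r.coeff 0 = ((a : ℕ) : ℤ) + 3 * b := by
      refine ⟨⟨(r.coeff 0 % 3).toNat, by omega⟩, r.coeff 0 / 3, ?_⟩
      simp only
      omega
    refine ⟨Fin.snoc v a, r.divX + Polynomial.C b * q, ?_⟩
    have hr0 : Polynomial.aeval ξ r =
        ((a : ℕ) : Q) + 3 * (b : Q) + ξ * Polynomial.aeval ξ r.divX := by
      rw [aeval_eq_coeff_zero_add, hab]
      push_cast
      ring
    rw [hr, Fin.sum_univ_castSucc]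
    simp only [Fin.snoc_castSucc, Fin.snoc_last, Fin.val_castSucc, Fin.val_last, hr0, map_add,
      map_mul, eq_intCast, map_intCast]
    rw [hq]
    ring

/-- If `Q` is additively generated by `ℤ[ξ]` and `η`, with `ξ` nilpotent, `3 ∈ ξℤ[ξ]` and
`3η = 0`, then the digit expansions bound the order of `Q`. -/
lemma card_le_of_digits {Q : Type*} [CommRing Q] (ξ η : Q) (N : ℕ) (hN : ξ ^ N = 0)
    (h3 : ∃ q : Polynomial ℤ, (3 : Q) = ξ * Polynomial.aeval ξ q) (h3η : 3 * η = 0)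
    (hQ : ∀ z : Q, ∃ (p : Polynomial ℤ) (b : ℤ), z = Polynomial.aeval ξ p + b * η) :
    Finite Q ∧ Nat.card Q ≤ 3 ^ (N + 1) := by
  let F : (Fin N → Fin 3) × Fin 3 → Q :=
    fun w => ∑ i, ((w.1 i : ℕ) : Q) * ξ ^ (i : ℕ) + ((w.2 : ℕ) : Q) * η
  have hF : Function.Surjective F := by
    intro z
    obtain ⟨p, b, rfl⟩ := hQ z
    obtain ⟨v, r, hr⟩ := exists_digits ξ h3 N p
    obtain ⟨a, c, hac⟩ : ∃ (a : Fin 3) (c : ℤ), b = ((a : ℕ) : ℤ) + 3 * c := by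
      refine ⟨⟨(b % 3).toNat, by omega⟩, b / 3, ?_⟩
      simp only
      omega
    refine ⟨(v, a), ?_⟩
    simp only [F, hr, hN, hac]
    push_cast
    linear_combination (-(c : Q)) * h3η
  refine ⟨Finite.of_surjective F hF, (Nat.card_le_card_of_surjective F hF).trans ?_⟩
  simp [pow_succ]

/-- With `m = M + 6`, the relations of the ideal force `3η = 0` and
`3 = -ξ(ξ + 3 + ρξ^(m-4))` for the residue classes `ξ`, `η` of the two variables, and the quotient
is additively generated by `ℤ[ξ]` and `η`. This bounds its order by `3^(m-1)`. -/
lemma quotient_card_le (M : ℕ) (β δ ρ : ℤ) (I : Ideal (MvPolynomial (Fin 2) ℤ))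
    (h1 : X 0 ^ (M + 4) ∈ I)
    (h2 : X 1 ^ 2 - C ((1 - β) * ρ) * X 0 ^ (M + 3) ∈ I)
    (h3 : X 0 * X 1 - C (ρ * δ) * X 0 ^ (M + 3) ∈ I)
    (h4 : X 0 ^ 2 + 3 * X 0 + 3 + 3 * X 1 + X 1 ^ 2 + C (ρ * β) * X 0 ^ (M + 3) ∈ I) :
    Finite (MvPolynomial (Fin 2) ℤ ⧸ I) ∧
      Nat.card (MvPolynomial (Fin 2) ℤ ⧸ I) ≤ 3 ^ (M + 5) := by
  set ξ : MvPolynomial (Fin 2) ℤ ⧸ I := Ideal.Quotient.mk I (X 0) with hξ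
  set η : MvPolynomial (Fin 2) ℤ ⧸ I := Ideal.Quotient.mk I (X 1) with hη
  have hC : ∀ a : ℤ, Ideal.Quotient.mk I (C a) = (a : MvPolynomial (Fin 2) ℤ ⧸ I) := by
    intro a
    simp
  rw [← Ideal.Quotient.eq_zero_iff_mem] at h1 h2 h3 h4
  simp only [map_add, map_sub, map_mul, map_pow, hC, ← hξ, ← hη, map_ofNat] at h1 h2 h3 h4
  push_cast at h2 h3 h4
  -- `ξη` and `η²` are multiples of `ξ^(M+3)`, hence killed by `ξ`.
  have hx : ξ ^ (M + 3) * ξ = 0 := by rw [← pow_succ]; exact h1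
  have hxxy : ξ * (ξ * η) = 0 := by
    linear_combination ξ * h3 + (ρ : MvPolynomial (Fin 2) ℤ ⧸ I) * δ * hx
  have hxy : ξ ^ (M + 3) * η = 0 := by
    linear_combination ξ ^ (M + 1) * hxxy
  have h3x : 3 * ξ ^ (M + 3) = 0 := by
    linear_combination ξ ^ (M + 3) * h4 - (ξ + 3) * hx - (3 + η) * hxy
      - (ρ : MvPolynomial (Fin 2) ℤ ⧸ I) * β * ξ ^ (M + 2) * hx
  have h3y : 3 * η = 0 := by
    linear_combination η * h4 - hxxy - 3 * h3 - (3 + η) * h2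
      - ((1 - β) * ρ : MvPolynomial (Fin 2) ℤ ⧸ I) * (h3x + hxy)
      - (ρ : MvPolynomial (Fin 2) ℤ ⧸ I) * δ * h3x
      - (ρ : MvPolynomial (Fin 2) ℤ ⧸ I) * β * hxy
  refine card_le_of_digits ξ η (M + 4) h1
    ⟨-(Polynomial.X + 3 + Polynomial.C ρ * Polynomial.X ^ (M + 2)), ?_⟩ h3y ?_
  · simp only [map_neg, map_add, map_mul, map_pow, Polynomial.aeval_X, eq_intCast,
      map_intCast, map_ofNat]
    linear_combination h4 - h3y - h2
  · intro z
    obtain ⟨f, rfl⟩ := Ideal.Quotient.mk_surjective z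
    induction f using MvPolynomial.induction_on with
    | C a => exact ⟨Polynomial.C a, 0, by simp⟩
    | add f g hf hg =>
      obtain ⟨p, b, hp⟩ := hf
      obtain ⟨q, c, hq⟩ := hg
      refine ⟨p + q, b + c, ?_⟩
      rw [map_add, hp, hq]
      simp only [map_add]
      push_cast
      ring
    | mul_X f i hf =>
      obtain ⟨p, b, hp⟩ := hf
      rw [map_mul, hp]
      fin_cases i
      · refine ⟨p * Polynomial.X + Polynomial.C (b * (ρ * δ)) * Polynomial.X ^ (M + 3), 0, ?_⟩
        simp only [map_add, map_mul, map_pow, Polynomial.aeval_X, eq_intCast,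
          map_intCast, Fin.zero_eta, ← hξ]
        push_cast
        linear_combination (b : MvPolynomial (Fin 2) ℤ ⧸ I) * h3
      · refine ⟨(p.divX * Polynomial.C (ρ * δ) + Polynomial.C (b * ((1 - β) * ρ)))
          * Polynomial.X ^ (M + 3), p.coeff 0, ?_⟩
        have hp1 := aeval_mul_of_mul_eq ξ η _ (sub_eq_zero.1 h3) p
        simp only [map_add, map_mul, map_pow, Polynomial.aeval_X, eq_intCast,
          map_intCast, Fin.mk_one, ← hη]
        push_cast
        linear_combination (b : MvPolynomial (Fin 2) ℤ ⧸ I) * h2 + hp1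

/-! ### Commutators and conjugation -/

lemma mul_pcomm {G : Type*} [Group G] (a b : G) : a * pcomm a b = b⁻¹ * a * b := by
  simp [pcomm, mul_assoc]

lemma pcomm_mem_commutator {G : Type*} [Group G] (a b : G) : pcomm a b ∈ commutator G := by
  have h := Subgroup.commutator_mem_commutator (H₁ := (⊤ : Subgroup G)) (H₂ := ⊤)
    (Subgroup.mem_top a⁻¹) (Subgroup.mem_top b⁻¹)
  simpa [commutatorElement_def, pcomm, commutator_def] using h

/-- In a metabelian group the operators `[·, x]` and `[·, y]` commute on the derived subgroup:
conjugation by `x` and `y` commute there because `[x, y]` acts trivially. -/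
lemma pcomm_pcomm_comm {G : Type*} [Group G]
    (habel : ∀ a ∈ commutator G, ∀ b ∈ commutator G, a * b = b * a)
    (x y w : G) (hw : w ∈ commutator G) :
    pcomm (pcomm w x) y = pcomm (pcomm w y) x := by
  have hc := habel _ (pcomm_mem_commutator w x) _ (pcomm_mem_commutator w y)
  have hxy : (x * y)⁻¹ * w * (x * y) = (y * x)⁻¹ * w * (y * x) := by
    have h := habel _ hw _ (pcomm_mem_commutator x y)
    have hx : x * y = y * x * pcomm x y := by simp [pcomm, mul_assoc]
    have hconj : ∀ g ∈ commutator G, g⁻¹ * ((y * x)⁻¹ * w * (y * x)) * g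
        = (y * x)⁻¹ * w * (y * x) := by
      intro g hg
      have hn := (inferInstance : (commutator G).Normal).conj_mem w hw (y * x)⁻¹
      rw [inv_inv] at hn
      rw [mul_assoc, habel _ hn _ hg, inv_mul_cancel_left]
    rw [← hconj _ (pcomm_mem_commutator x y), hx]
    group
  -- Both sides extend `w·[w,x]·[w,y]·(-)` to the conjugate of `w` by `xy`, respectively `yx`.
  have e1 : (x * y)⁻¹ * w * (x * y) = w * pcomm w y * (pcomm w x * pcomm (pcomm w x) y) := by
    simp [pcomm, mul_assoc]
  have e2 : (y * x)⁻¹ * w * (y * x) = w * pcomm w x * (pcomm w y * pcomm (pcomm w y) x) := by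
    simp [pcomm, mul_assoc]
  rw [e1, e2] at hxy
  have : w * (pcomm w x * pcomm w y) * pcomm (pcomm w x) y
      = w * (pcomm w x * pcomm w y) * pcomm (pcomm w y) x := by
    conv_lhs => rw [hc]
    simpa [mul_assoc] using hxy
  exact mul_left_cancel this

lemma wIter_mem_commutator {G : Type*} [Group G] (x y : G) (i j : ℕ) :
    wIter x y i j ∈ commutator G := by
  unfold wIter
  cases i with
  | succ i => rw [Function.iterate_succ_apply']; exact pcomm_mem_commutator _ _
  | zero =>
    cases j with
    | succ j => simp only [Function.iterate_zero, id, Function.iterate_succ_apply']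
                exact pcomm_mem_commutator _ _
    | zero => exact pcomm_mem_commutator _ _

lemma pcomm_wIter_left {G : Type*} [Group G] (x y : G) (i j : ℕ) :
    pcomm (wIter x y i j) x = wIter x y (i + 1) j := by
  simp [wIter, Function.iterate_succ_apply']

lemma pcomm_wIter_right {G : Type*} [Group G]
    (habel : ∀ a ∈ commutator G, ∀ b ∈ commutator G, a * b = b * a)
    (x y : G) (i j : ℕ) :
    pcomm (wIter x y i j) y = wIter x y i (j + 1) := by
  induction i with
  | zero => simp [wIter, Function.iterate_succ_apply']
  | succ i ih =>
    rw [← pcomm_wIter_left, pcomm_pcomm_comm habel _ _ _ (wIter_mem_commutator x y i j), ih,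
      pcomm_wIter_left]

/-! ### The image of the Furtwängler map -/

/-- The Furtwängler map as a homomorphism from the additive group of the polynomial ring. -/
noncomputable def furtwaenglerHom {G : Type*} [Group G] (Ψ : MvPolynomial (Fin 2) ℤ → G)
    (hΨadd : ∀ f g, Ψ (f + g) = Ψ f * Ψ g) : Multiplicative (MvPolynomial (Fin 2) ℤ) →* G :=
  MonoidHom.mk' (fun f => Ψ f.toAdd) (fun f g => hΨadd f.toAdd g.toAdd)

lemma psi_zsmul {G : Type*} [Group G] (Ψ : MvPolynomial (Fin 2) ℤ → G)
    (hΨadd : ∀ f g, Ψ (f + g) = Ψ f * Ψ g) (a : ℤ) (f : MvPolynomial (Fin 2) ℤ) :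
    Ψ (a • f) = Ψ f ^ a :=
  map_zpow (furtwaenglerHom Ψ hΨadd) (Multiplicative.ofAdd f) a

/-- Every polynomial is a sum of integer multiples of the monomials `X₀^i X₁^j`. -/
lemma poly_induction {P : MvPolynomial (Fin 2) ℤ → Prop}
    (hadd : ∀ f g, P f → P g → P (f + g))
    (hmon : ∀ (a : ℤ) (i j : ℕ), P (a • (X 0 ^ i * X 1 ^ j))) (f : MvPolynomial (Fin 2) ℤ) :
    P f := by
  induction f using MvPolynomial.induction_on' with
  | add f g hf hg => exact hadd f g hf hg
  | monomial u a =>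
    have h := hmon a (u 0) (u 1)
    rw [MvPolynomial.smul_eq_C_mul] at h
    rw [MvPolynomial.monomial_eq, Finsupp.prod_fintype _ _ (by simp)]
    simpa [Fin.prod_univ_two] using h

/-- If conjugation by `g` acts on the iterated commutators as multiplication by the polynomial `Z`,
it does so on the whole image of the Furtwängler map. -/
lemma psi_conj {G : Type*} [Group G] (Ψ : MvPolynomial (Fin 2) ℤ → G)
    (hΨadd : ∀ f g, Ψ (f + g) = Ψ f * Ψ g) (x y g : G) (Z : MvPolynomial (Fin 2) ℤ)
    (hΨmon : ∀ i j : ℕ, Ψ (X 0 ^ i * X 1 ^ j) = wIter x y i j)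
    (hg : ∀ i j, g⁻¹ * wIter x y i j * g = Ψ (Z * (X 0 ^ i * X 1 ^ j)))
    (f : MvPolynomial (Fin 2) ℤ) : g⁻¹ * Ψ f * g = Ψ (Z * f) := by
  induction f using poly_induction with
  | hadd f h hf hh =>
    rw [mul_add, hΨadd, hΨadd, ← hf, ← hh]
    group
  | hmon a i j =>
    rw [mul_smul_comm, psi_zsmul Ψ hΨadd, psi_zsmul Ψ hΨadd, hΨmon, ← hg]
    have h := conj_zpow (i := a) (a := g⁻¹) (b := wIter x y i j)
    simpa using h.symm

/-- A subgroup of a finite group that is stable under conjugation by two generators and contains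
their commutator contains the derived subgroup. -/
lemma commutator_le_of_conj {G : Type*} [Group G] [Finite G] (x y : G)
    (hgen : Subgroup.closure ({x, y} : Set G) = ⊤) (H : Subgroup G)
    (hx : ∀ h ∈ H, x⁻¹ * h * x ∈ H) (hy : ∀ h ∈ H, y⁻¹ * h * y ∈ H) (hs : pcomm y x ∈ H) :
    commutator G ≤ H := by
  have hall : ∀ g : G, ∀ h ∈ H, g⁻¹ * h * g ∈ H := by
    intro g
    have hgm : g ∈ Subgroup.closure ({x, y} : Set G) := hgen ▸ Subgroup.mem_top g
    induction hgm using Subgroup.closure_induction with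
    | mem g hg =>
      rcases hg with rfl | hg
      · exact hx
      · rw [Set.mem_singleton_iff] at hg
        subst hg
        exact hy
    | one => simp
    | mul a b _ _ ha hb =>
      intro h hh
      have := hb _ (ha h hh)
      simpa [mul_assoc] using this
    | inv a _ ha =>
      -- In a finite group the inverse is a positive power.
      have hpow : ∀ k : ℕ, ∀ h ∈ H, (a ^ k)⁻¹ * h * a ^ k ∈ H := by
        intro k
        induction k with
        | zero => simp
        | succ k ih =>
          intro h hh
          have := ha _ (ih h hh)
          simpa [pow_succ, mul_assoc] using this
      have hinv : a⁻¹ = a ^ (orderOf a - 1) := by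
        rw [inv_eq_iff_mul_eq_one, ← pow_succ', Nat.sub_add_cancel (orderOf_pos a), pow_orderOf_eq_one]
      rw [hinv]
      exact hpow _
  have hnorm : H.Normal := ⟨fun h hh g => by simpa using hall g⁻¹ h hh⟩
  have hcomm : ∀ a b : G, ((a : G ⧸ H) * b) = b * a := by
    have hxy : (x : G ⧸ H) * y = y * x := by
      have h : ((pcomm y x : G) : G ⧸ H) = 1 := (QuotientGroup.eq_one_iff _).2 hs
      have e : y * x = x * y * pcomm y x := by simp [pcomm, mul_assoc]
      rw [← QuotientGroup.mk_mul, ← QuotientGroup.mk_mul, e, QuotientGroup.mk_mul _ (x * y), h,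
        mul_one]
    intro a b
    have ha : a ∈ Subgroup.closure ({x, y} : Set G) := hgen ▸ Subgroup.mem_top a
    have hb : b ∈ Subgroup.closure ({x, y} : Set G) := hgen ▸ Subgroup.mem_top b
    change Commute (a : G ⧸ H) b
    induction ha, hb using Subgroup.closure_induction₂ with
    | mem a b ha hb =>
      rcases ha with rfl | rfl <;> rcases hb with rfl | rfl
      · rfl
      · exact hxy
      · exact hxy.symm
      · rfl
    | one_left a _ => exact Commute.one_left _
    | one_right a _ => exact Commute.one_right _
    | mul_left a b c _ _ _ h1 h2 => exact Commute.mul_left h1 h2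
    | mul_right a b c _ _ _ h1 h2 => exact Commute.mul_right h1 h2
    | inv_left a b _ _ h => exact Commute.inv_left h
    | inv_right a b _ _ h => exact Commute.inv_right h
  rw [commutator_def, Subgroup.commutator_le]
  intro a _ b _
  rw [← QuotientGroup.eq_one_iff, commutatorElement_def]
  simp only [QuotientGroup.mk_mul, QuotientGroup.mk_inv]
  rw [hcomm a b]
  group

/-- The derived subgroup is a cyclic `ℤ[X, Y]`-module generated by `s₂`: the image of the
Furtwängler map contains it, as conjugation by `x` and `y` is multiplication by `1 + X` and
`1 + Y`. -/
lemma commutator_le_range {G : Type*} [Group G] [Finite G] (x y : G)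
    (habel : ∀ a ∈ commutator G, ∀ b ∈ commutator G, a * b = b * a)
    (hgen : Subgroup.closure ({x, y} : Set G) = ⊤)
    (Ψ : MvPolynomial (Fin 2) ℤ → G)
    (hΨadd : ∀ f g, Ψ (f + g) = Ψ f * Ψ g)
    (hΨmon : ∀ i j : ℕ, Ψ (X 0 ^ i * X 1 ^ j) = wIter x y i j) :
    commutator G ≤ (furtwaenglerHom Ψ hΨadd).range := by
  have hcx := psi_conj Ψ hΨadd x y x (1 + X 0) hΨmon fun i j => by
    rw [← mul_pcomm, pcomm_wIter_left, add_mul, one_mul, hΨadd, hΨmon,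
      ← mul_assoc, ← pow_succ', hΨmon]
  have hcy := psi_conj Ψ hΨadd x y y (1 + X 1) hΨmon fun i j => by
    rw [← mul_pcomm, pcomm_wIter_right habel, add_mul, one_mul, hΨadd, hΨmon,
      mul_left_comm, ← pow_succ', hΨmon]
  refine commutator_le_of_conj x y hgen _ ?_ ?_ ?_
  · rintro _ ⟨f, rfl⟩
    exact ⟨Multiplicative.ofAdd ((1 + X 0) * f.toAdd), (hcx f.toAdd).symm⟩
  · rintro _ ⟨f, rfl⟩
    exact ⟨Multiplicative.ofAdd ((1 + X 1) * f.toAdd), (hcy f.toAdd).symm⟩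
  · exact ⟨Multiplicative.ofAdd (X 0 ^ 0 * X 1 ^ 0), hΨmon 0 0⟩

/-- An ideal `I` inside the annihilator `A` equals `A` as soon as its quotient is no larger than
the derived subgroup. -/
lemma annihilator_eq {G : Type*} [Group G] [Finite G] (x y : G)
    (habel : ∀ a ∈ commutator G, ∀ b ∈ commutator G, a * b = b * a)
    (hgen : Subgroup.closure ({x, y} : Set G) = ⊤)
    (Ψ : MvPolynomial (Fin 2) ℤ → G)
    (hΨadd : ∀ f g, Ψ (f + g) = Ψ f * Ψ g)
    (hΨmon : ∀ i j : ℕ, Ψ (X 0 ^ i * X 1 ^ j) = wIter x y i j)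
    (A I : Ideal (MvPolynomial (Fin 2) ℤ)) (hA : ∀ f, f ∈ A ↔ Ψ f = 1) (hIA : I ≤ A)
    (hfin : Finite (MvPolynomial (Fin 2) ℤ ⧸ I))
    (hcard : Nat.card (MvPolynomial (Fin 2) ℤ ⧸ I) ≤ Nat.card (commutator G)) : A = I := by
  refine le_antisymm ?_ hIA
  have hle := commutator_le_range x y habel hgen Ψ hΨadd hΨmon
  have hzero : Ψ 0 = 1 := (hA 0).1 A.zero_mem
  let g : MvPolynomial (Fin 2) ℤ ⧸ I → (furtwaenglerHom Ψ hΨadd).range :=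
    fun q => Quotient.liftOn' q
      (fun f => ⟨Ψ f, Multiplicative.ofAdd f, rfl⟩) (by
        intro f h hfh
        have hsub : f - h ∈ I := (Submodule.quotientRel_def I).1 hfh
        have h1 := (hA _).1 (hIA hsub)
        refine Subtype.ext ?_
        change Ψ f = Ψ h
        rw [← sub_add_cancel f h, hΨadd, h1, one_mul])
  have hg : Function.Surjective g := by
    rintro ⟨_, f, rfl⟩
    exact ⟨Ideal.Quotient.mk I f.toAdd, rfl⟩
  have hbij : Function.Bijective g :=
    hg.bijective_of_nat_card_le (hcard.trans (Subgroup.card_le_of_le hle))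
  intro f hf
  rw [← Ideal.Quotient.eq_zero_iff_mem]
  refine hbij.1 (Subtype.ext ?_)
  change Ψ f = Ψ 0
  rw [(hA f).1 hf, hzero]

/-! ### The relations of the presentation -/

lemma wIter_zero_right {G : Type*} [Group G] (x y : G) (i : ℕ) :
    wIter x y i 0 = sSeq x y (i + 2) := by
  simp [wIter, sSeq]

lemma wIter_zero_left {G : Type*} [Group G] (x y : G) (j : ℕ) :
    wIter x y 0 j = tSeq x y (j + 2) := by
  simp [wIter, tSeq]

/-- Since `τ₃` and `τ₄` commute, `t₃⁻¹τ₃τ₄ = uτ₃^β` says `t₃⁻¹τ₄ = uτ₃^(β-1)`.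
Conjugating this by `y`, where `u` commutes with `y`, yields `t₄ = τ₄^(1-β)`.
No membership of `τ₃` in the derived subgroup enters. -/
lemma t_four_eq {G : Type*} [Group G] (y t₃ t₄ τ₃ τ₄ u : G) (β : ℤ)
    (ht : y⁻¹ * t₃ * y = t₃ * t₄) (hτ : y⁻¹ * τ₃ * y = τ₃ * τ₄) (hτ4 : y⁻¹ * τ₄ * y = τ₄)
    (hu : y⁻¹ * u * y = u) (hcτ : Commute τ₃ τ₄) (hct : Commute t₃ t₄)
    (hct4 : Commute t₄ τ₄)
    (h : t₃⁻¹ * τ₃ * τ₄ = u * τ₃ ^ β) : t₄ = τ₄ ^ (1 - β) := by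
  obtain ⟨φ, hφ⟩ : ∃ φ : G →* G, ∀ g, φ g = y⁻¹ * g * y :=
    ⟨(MulAut.conj y⁻¹).toMonoidHom, fun g => by simp⟩
  have h0 : t₃⁻¹ * τ₄ = u * τ₃ ^ (β - 1) := by
    rw [mul_assoc, hcτ.eq, ← mul_assoc] at h
    rw [zpow_sub, zpow_one, ← mul_assoc, ← h, mul_inv_cancel_right]
  have h1 := congrArg φ h0
  simp only [map_mul, map_zpow, map_inv] at h1
  simp only [hφ, ht, hτ, hτ4, hu] at h1
  rw [hcτ.mul_zpow, ← mul_assoc u, ← h0, hct.eq, mul_inv_rev, mul_assoc, mul_assoc] at h1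
  have h2 := mul_left_cancel h1
  rw [(hct4.inv_left).eq] at h2
  rw [← neg_sub, zpow_neg, ← mul_left_cancel h2, inv_inv]

/-! ### The annihilator -/

theorem annihilator_defect_one_coclass_two
    {G : Type*} [Group G] [Finite G]
    (m n e k : ℕ) (x y : G) (α β γ δ ρ : ℤ)
    (hm : 4 ≤ m) (hmn : m < n) (hn2m : n ≤ 2 * m - 3) (he : e = n - m + 2) (he3 : 3 ≤ e)
    (hk : k ≤ 1) (hkrho : k = 0 ↔ ρ = 0)
    (hα : α = -1 ∨ α = 0 ∨ α = 1) (hβ : β = -1 ∨ β = 0 ∨ β = 1)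
    (hγ : γ = -1 ∨ γ = 0 ∨ γ = 1) (hδ : δ = -1 ∨ δ = 0 ∨ δ = 1)
    (hρ : ρ = -1 ∨ ρ = 0 ∨ ρ = 1)
    (hcard : Nat.card G = 3 ^ n)
    (hab : Nat.card (G ⧸ commutator G) = 9)
    (habel : ∀ a ∈ commutator G, ∀ b ∈ commutator G, a * b = b * a)
    (hgen : Subgroup.closure ({x, y} : Set G) = ⊤)
    (hR1s : ∀ i, 3 ≤ i → sSeq x y i ^ 3 * sSeq x y (i + 1) ^ 3 * sSeq x y (i + 2) = 1)
    (hR1t : ∀ i, 3 ≤ i → tSeq x y i ^ 3 * tSeq x y (i + 1) ^ 3 * tSeq x y (i + 2) = 1)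
    (hR2sig : ∀ j, 3 ≤ j → sigSeq x y j ^ 3 * sigSeq x y (j + 1) ^ 3 * sigSeq x y (j + 2) = 1)
    (hR2tau : ∀ j, 3 ≤ j → tauSeq x y j ^ 3 * tauSeq x y (j + 1) ^ 3 * tauSeq x y (j + 2) = 1)
    (hR3s : sSeq x y 2 ^ 3 * sSeq x y 3 ^ 3 * sSeq x y 4 = (tauSeq x y 4)⁻¹)
    (hR3t : tSeq x y 2 ^ 3 * tSeq x y 3 ^ 3 * tSeq x y 4 = sigSeq x y 4)
    (hR4sig : ∀ j, 3 ≤ j → pcomm (sigSeq x y j) y = 1)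
    (hR4tau : ∀ j, 3 ≤ j → pcomm (tauSeq x y j) x = 1)
    (hR5a : ∀ i, 3 ≤ i → i ≤ m - 1 → sigSeq x y i ≠ 1)
    (hR5b : ∀ i, m ≤ i → sigSeq x y i = 1)
    (hR6a : ∀ j, 3 ≤ j → j ≤ e + k → tauSeq x y j ≠ 1)
    (hR6b : ∀ j, e + k + 1 ≤ j → tauSeq x y j = 1)
    (hR7sig : ∀ i, 5 ≤ i → sigSeq x y i = sSeq x y (i - 2) ^ 3)
    (hR7tau : ∀ i, 5 ≤ i → tauSeq x y i = tSeq x y (i - 2) ^ (-3 : ℤ))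
    (hR8s : ∀ j, 5 ≤ j → sSeq x y j = (sigSeq x y j)⁻¹ * (sigSeq x y (j + 1))⁻¹)
    (hR8t : ∀ j, 5 ≤ j → tSeq x y j = tauSeq x y j * tauSeq x y (j + 1))
    (hR9s : pcomm (sSeq x y 3) y = sigSeq x y (m - 1) ^ (-(ρ * δ)))
    (hR9t : pcomm (tSeq x y 3) x = sigSeq x y (m - 1) ^ (-(ρ * δ)))
    (hR10 : sSeq x y 2 ^ 3 * (sSeq x y 3 * tSeq x y 3) ^ 3 * sSeq x y 4 * tSeq x y 4 =
      sigSeq x y (m - 1) ^ (ρ * β))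
    (hR11 : tauSeq x y (e + 1) = sigSeq x y (m - 1) ^ (-ρ))
    (hR12 : sSeq x y 4 * sigSeq x y 4 * sigSeq x y 5 = sigSeq x y (m - 1) ^ (ρ * β))
    (hR13 : sSeq x y 3 * sigSeq x y 3 * sigSeq x y 4 =
      sigSeq x y (m - 2) ^ (ρ * β) * sigSeq x y (m - 1) ^ γ * tauSeq x y e ^ δ)
    (hR14 : (tSeq x y 3)⁻¹ * tauSeq x y 3 * tauSeq x y 4 =
      sigSeq x y (m - 2) ^ (ρ * δ) * sigSeq x y (m - 1) ^ α * tauSeq x y e ^ β)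
    (hk1 : k = 1) (hm6 : 6 ≤ m) (hee : e = 3)
    (Ψ : MvPolynomial (Fin 2) ℤ → G)
    (hΨadd : ∀ f g, Ψ (f + g) = Ψ f * Ψ g)
    (hΨmon : ∀ i j : ℕ, Ψ (X 0 ^ i * X 1 ^ j) = wIter x y i j)
    (A : Ideal (MvPolynomial (Fin 2) ℤ))
    (hA : ∀ f, f ∈ A ↔ Ψ f = 1)
    :
    A = Ideal.span {X 0 ^ (m - 2),
      X 1 ^ 2 - C ((1 - β) * ρ) * X 0 ^ (m - 3),
      X 0 * X 1 - C (ρ * δ) * X 0 ^ (m - 3),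
      X 0 ^ 2 + 3 * X 0 + 3 + 3 * X 1 + X 1 ^ 2 + C (ρ * β) * X 0 ^ (m - 3)} := by
  obtain ⟨M, rfl⟩ : ∃ M, m = M + 6 := ⟨m - 6, by omega⟩
  obtain rfl : n = M + 7 := by omega
  subst hee hk1
  change A = Ideal.span {X 0 ^ (M + 4),
      X 1 ^ 2 - C ((1 - β) * ρ) * X 0 ^ (M + 3),
      X 0 * X 1 - C (ρ * δ) * X 0 ^ (M + 3),
      X 0 ^ 2 + 3 * X 0 + 3 + 3 * X 1 + X 1 ^ 2 + C (ρ * β) * X 0 ^ (M + 3)}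
  change pcomm (tSeq x y 3) x = sigSeq x y (M + 5) ^ (-(ρ * δ)) at hR9t
  change sSeq x y 2 ^ 3 * (sSeq x y 3 * tSeq x y 3) ^ 3 * sSeq x y 4 * tSeq x y 4 =
      sigSeq x y (M + 5) ^ (ρ * β) at hR10
  change tauSeq x y 4 = sigSeq x y (M + 5) ^ (-ρ) at hR11
  change (tSeq x y 3)⁻¹ * tauSeq x y 3 * tauSeq x y 4 =
      sigSeq x y (M + 4) ^ (ρ * δ) * sigSeq x y (M + 5) ^ α * tauSeq x y 3 ^ β at hR14
  have hsmul := psi_zsmul Ψ hΨadd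
  have hsub : ∀ f g, Ψ (f - g) = Ψ f * (Ψ g)⁻¹ := fun f g => by
    rw [sub_eq_add_neg, hΨadd, ← neg_one_zsmul, hsmul, zpow_neg_one]
  have hs : ∀ i, Ψ (X 0 ^ i) = sSeq x y (i + 2) := fun i => by
    rw [← wIter_zero_right, ← hΨmon, pow_zero, mul_one]
  have ht : ∀ j, Ψ (X 1 ^ j) = tSeq x y (j + 2) := fun j => by
    rw [← wIter_zero_left, ← hΨmon, pow_zero, one_mul]
  have hσm : sigSeq x y (M + 6) = 1 := hR5b _ le_rfl
  have hS : sSeq x y (M + 5) = (sigSeq x y (M + 5))⁻¹ := by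
    rw [hR8s _ (by omega), hσm, inv_one, mul_one]
  have hCs : ∀ a : ℤ, Ψ (C a * X 0 ^ (M + 3)) = sigSeq x y (M + 5) ^ (-a) := fun a => by
    rw [← smul_eq_C_mul, hsmul, hs, hS, inv_zpow, zpow_neg]
  have hσy : ∀ j, 3 ≤ j → Commute (sigSeq x y j) y := fun j hj => by
    have h := mul_pcomm (sigSeq x y j) y
    rw [hR4sig j hj, mul_one, mul_assoc, eq_inv_mul_iff_mul_eq] at h
    exact h.symm
  have hτx : Commute (tauSeq x y 4) x := by
    have h := mul_pcomm (tauSeq x y 4) x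
    rw [hR4tau 4 (by norm_num), mul_one, mul_assoc, eq_inv_mul_iff_mul_eq] at h
    exact h.symm
  have ht4 : tSeq x y 4 = tauSeq x y 4 ^ (1 - β) := by
    have hτ5 : pcomm (tauSeq x y 4) y = 1 := hR6b 5 le_rfl
    have hu : Commute (sigSeq x y (M + 4) ^ (ρ * δ) * sigSeq x y (M + 5) ^ α) y :=
      ((hσy _ (by omega)).zpow_left _).mul_left ((hσy _ (by omega)).zpow_left _)
    have ht4m : tSeq x y 4 ∈ commutator G := pcomm_mem_commutator _ _
    refine t_four_eq y (tSeq x y 3) _ (tauSeq x y 3) _ _ β (mul_pcomm _ _).symm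
      (mul_pcomm _ _).symm ?_ ?_ ?_ ?_ ?_ hR14
    · rw [← mul_pcomm, hτ5, mul_one]
    · rw [mul_assoc, hu.eq, inv_mul_cancel_left]
    · exact (hτx.pow_right 3).symm
    · exact habel _ (pcomm_mem_commutator _ _) _ ht4m
    · exact habel _ ht4m _ (pcomm_mem_commutator _ _)
  have hIA : Ideal.span {X 0 ^ (M + 4),
      X 1 ^ 2 - C ((1 - β) * ρ) * X 0 ^ (M + 3),
      X 0 * X 1 - C (ρ * δ) * X 0 ^ (M + 3),
      X 0 ^ 2 + 3 * X 0 + 3 + 3 * X 1 + X 1 ^ 2 + C (ρ * β) * X 0 ^ (M + 3)} ≤ A := by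
    rw [Ideal.span_le]
    rintro f (rfl | rfl | rfl | rfl)
    · refine (hA _).2 ?_
      rw [hs, hR8s _ (by omega), hR5b _ (by omega), hR5b _ (by omega)]
      simp
    · refine (hA _).2 ?_
      rw [hsub, hCs, ht, ht4, hR11, ← zpow_mul, ← zpow_neg, ← zpow_add]
      ring_nf
      simp
    · refine (hA _).2 ?_
      have hXY : Ψ (X 0 * X 1) = pcomm (tSeq x y 3) x := by
        have h := hΨmon 1 1
        rw [pow_one, pow_one] at h
        rw [h, ← pcomm_wIter_left, wIter_zero_left]
      rw [hsub, hCs, hXY, hR9t, mul_inv_cancel]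
    · refine (hA _).2 ?_
      -- The summands are grouped as in the relation for `s₂³(s₃t₃)³s₄t₄`.
      have hT : (X 0 ^ 2 + 3 * X 0 + 3 + 3 * X 1 + X 1 ^ 2 + C (ρ * β) * X 0 ^ (M + 3) :
          MvPolynomial (Fin 2) ℤ) = (3 : ℤ) • X 0 ^ 0 + (3 : ℤ) • (X 0 ^ 1 + X 1 ^ 1) + X 0 ^ 2
            + X 1 ^ 2 + C (ρ * β) * X 0 ^ (M + 3) := by
        simp only [zsmul_eq_mul]
        push_cast
        ring
      rw [hT, hΨadd, hΨadd, hΨadd, hΨadd, hsmul, hsmul, hΨadd, hCs, hs, hs, hs, ht, ht]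
      have h3 : ∀ g : G, g ^ (3 : ℤ) = g ^ 3 := fun g => by norm_cast
      rw [h3, h3, zpow_neg, mul_inv_eq_one]
      exact hR10
  have hcG : Nat.card (commutator G) = 3 ^ (M + 5) := by
    have h := Subgroup.card_eq_card_quotient_mul_card_subgroup (commutator G)
    rw [hcard, hab] at h
    have h7 : 3 ^ (M + 7) = 9 * 3 ^ (M + 5) := by ring
    omega
  obtain ⟨hfin, hle⟩ := quotient_card_le M β δ ρ _
    (Ideal.subset_span (Set.mem_insert _ _))
    (Ideal.subset_span (Set.mem_insert_of_mem _ (Set.mem_insert _ _)))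
    (Ideal.subset_span (Set.mem_insert_of_mem _ (Set.mem_insert_of_mem _ (Set.mem_insert _ _))))
    (Ideal.subset_span (Set.mem_insert_of_mem _ (Set.mem_insert_of_mem _
      (Set.mem_insert_of_mem _ (Set.mem_singleton _)))))
  exact annihilator_eq x y habel hgen Ψ hΨadd hΨmon A _ hA hIA hfin (hle.trans hcG.ge)
end
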